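/- arXiv:2011.14742 — 4 statements merged into one kernel-verified Lean document; each statement's English description precedes it below -/
import Mathlib

section
/- Let G be a Young function satisfying condition (G1) and condition (G2). Then for every a, b ∈ ℝ one has (G(|a|) + G(|b|))/2 ≥ G(|(a + b)/2|) + G(|(a − b)/2|). -/
open MeasureTheory Filter Set Topology
open scoped ENNReal

noncomputable section

abbrev Eu (n : ℕ) := EuclideanSpace ℝ (Fin n)

/-- sgn(t) = t/|t| for t ≠ 0, sgn(0)=0. -/
def rsgn (t : ℝ) : ℝ := if t = 0 then 0 else t / |t|

/-- `G` is a Young function with right-continuous density `g = G'`. -/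
structure IsYoungPair (G g : ℝ → ℝ) : Prop where
  g_zero : g 0 = 0
  g_pos : ∀ t > 0, 0 < g t
  g_mono : MonotoneOn g (Ici (0:ℝ))
  g_rightCont : ∀ t ≥ (0:ℝ), ContinuousWithinAt g (Ici t) t
  g_tendsto : Tendsto g atTop atTop
  G_eq : ∀ t ≥ (0:ℝ), G t = ∫ τ in (0:ℝ)..t, g τ

/-- Condition (G1): `1 < p⁻ ≤ p⁺ < ∞` and `p⁻ ≤ t g(t)/G(t) ≤ p⁺` for `t > 0`. -/
def CondG1 (G g : ℝ → ℝ) (pm pp : ℝ) : Prop :=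
  1 < pm ∧ pm ≤ pp ∧ ∀ t > 0, pm ≤ t * g t / G t ∧ t * g t / G t ≤ pp

/-- Condition (G2): `t ↦ G (√ t)` is convex on `[0,∞)`. -/
def CondG2 (G : ℝ → ℝ) : Prop := ConvexOn ℝ (Ici (0:ℝ)) (fun t => G (Real.sqrt t))

/-- Condition (G3). -/
def CondG3 (G : ℝ → ℝ) (n : ℕ) (s : ℝ) : Prop :=
  ∃ Ginv : ℝ → ℝ, (∀ t ≥ (0:ℝ), Ginv (G t) = t) ∧ (∀ t ≥ (0:ℝ), G (Ginv t) = t) ∧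
    IntegrableOn (fun τ => Ginv τ / τ ^ (((n : ℝ) + s) / n)) (Ioo 0 1) ∧
    ¬ IntegrableOn (fun τ => Ginv τ / τ ^ (((n : ℝ) + s) / n)) (Ioi 1)

/-- The modular `Φ_{G,Ω}(u) = ∫_Ω G(|u|) dx`. -/
def PhiG (n : ℕ) (G : ℝ → ℝ) (Ω : Set (Eu n)) (u : Eu n → ℝ) : ℝ≥0∞ :=
  ∫⁻ x in Ω, ENNReal.ofReal (G |u x|)

/-- The s-Hölder quotient. -/
def Ds (n : ℕ) (s : ℝ) (u : Eu n → ℝ) (x y : Eu n) : ℝ := (u x - u y) / ‖x - y‖ ^ s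

/-- The fractional modular `Φ_{s,G}(u) = ∬ G(|D_s u|) dμ`, `dμ = dx dy/|x-y|ⁿ`. -/
def PhisG (n : ℕ) (s : ℝ) (G : ℝ → ℝ) (u : Eu n → ℝ) : ℝ≥0∞ :=
  ∫⁻ p : Eu n × Eu n, ENNReal.ofReal (G |Ds n s u p.1 p.2| / ‖p.1 - p.2‖ ^ (n : ℝ))

/-- Luxemburg norm on `L^G(Ω)`. -/
def luxNorm (n : ℕ) (G : ℝ → ℝ) (Ω : Set (Eu n)) (u : Eu n → ℝ) : ℝ :=
  sInf {l : ℝ | 0 < l ∧ PhiG n G Ω (fun x => u x / l) ≤ 1}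

/-- Gagliardo `(s,G)`-seminorm. -/
def gagliardo (n : ℕ) (s : ℝ) (G : ℝ → ℝ) (u : Eu n → ℝ) : ℝ :=
  sInf {l : ℝ | 0 < l ∧ PhisG n s G (fun x => u x / l) ≤ 1}

/-- Membership in `W^{s,G}_0(Ω)`. -/
def MemW0 (n : ℕ) (s : ℝ) (G : ℝ → ℝ) (Ω : Set (Eu n)) (u : Eu n → ℝ) : Prop :=
  Measurable u ∧ PhiG n G univ u < ⊤ ∧ PhisG n s G u < ⊤ ∧
    ∀ᵐ x : Eu n ∂volume, x ∉ Ω → u x = 0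

/-- `λ` is a Dirichlet eigenvalue of the fractional g-Laplacian with eigenfunction `u`. -/
def DirichletEigen (n : ℕ) (s : ℝ) (G g : ℝ → ℝ) (Ω : Set (Eu n)) (lam : ℝ)
    (u : Eu n → ℝ) : Prop :=
  MemW0 n s G Ω u ∧ ¬ (u =ᵐ[(volume : Measure (Eu n))] (fun _ => (0:ℝ))) ∧
  ∀ v : Eu n → ℝ, MemW0 n s G Ω v →
    (∫ p : Eu n × Eu n,
        g |Ds n s u p.1 p.2| * rsgn (Ds n s u p.1 p.2) * Ds n s v p.1 p.2 / ‖p.1 - p.2‖ ^ (n : ℝ))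
      = lam * ∫ x in Ω, g |u x| * rsgn (u x) * v x

/-- `Ω` has Lipschitz (`C^{0,1}`) boundary: locally, `Ω` is bi-Lipschitz equivalent to a halfspace. -/
def HasLipschitzBoundary (n : ℕ) (Ω : Set (Eu n)) : Prop :=
  ∀ x ∈ frontier Ω, ∃ U : Set (Eu n), IsOpen U ∧ x ∈ U ∧
    ∃ φ ψ : Eu n → Eu n, (∃ K, LipschitzWith K φ) ∧ (∃ K, LipschitzWith K ψ) ∧
      (∀ y ∈ U, ψ (φ y) = y) ∧
      ∃ e : Eu n, e ≠ 0 ∧ ∀ y ∈ U, (y ∈ Ω ↔ 0 < @inner ℝ _ _ e (φ y))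

/-- Complementary Young function `G̃(t) = sup{t w − G(w) : w > 0}`. -/
def complYoung (G : ℝ → ℝ) (t : ℝ) : ℝ := sSup {y : ℝ | ∃ w > (0:ℝ), y = t * w - G w}

/-- Modular over `ℝ²ⁿ ∖ (Ωᶜ × Ωᶜ)`. -/
def PhisGStar (n : ℕ) (s : ℝ) (G : ℝ → ℝ) (Ω : Set (Eu n)) (u : Eu n → ℝ) : ℝ≥0∞ :=
  ∫⁻ p in {p : Eu n × Eu n | p.1 ∈ Ω ∨ p.2 ∈ Ω},
    ENNReal.ofReal (G |Ds n s u p.1 p.2| / ‖p.1 - p.2‖ ^ (n : ℝ))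

/-- The boundary modular `∫_{ℝⁿ∖Ω} β G(|u|)`. -/
def PhiGBeta (n : ℕ) (G : ℝ → ℝ) (Ω : Set (Eu n)) (β : Eu n → ℝ) (u : Eu n → ℝ) : ℝ≥0∞ :=
  ∫⁻ x in Ωᶜ, ENNReal.ofReal (β x * G |u x|)

/-- The functional `J_β`. -/
def Jbeta (n : ℕ) (s : ℝ) (G : ℝ → ℝ) (Ω : Set (Eu n)) (β : Eu n → ℝ) (u : Eu n → ℝ) : ℝ≥0∞ :=
  PhisGStar n s G Ω u + PhiGBeta n G Ω β u

/-- Membership in the space `X_β(Ω)`. -/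
def MemXbeta (n : ℕ) (s : ℝ) (G : ℝ → ℝ) (Ω : Set (Eu n)) (β : Eu n → ℝ) (u : Eu n → ℝ) :
    Prop :=
  Measurable u ∧ PhisGStar n s G Ω u < ⊤ ∧ PhiG n G Ω u < ⊤ ∧ PhiGBeta n G Ω β u < ⊤

/-- Luxemburg-type norm associated to the modular `PhiGBeta`. -/
def luxNormBeta (n : ℕ) (G : ℝ → ℝ) (Ω : Set (Eu n)) (β : Eu n → ℝ) (u : Eu n → ℝ) : ℝ :=
  sInf {l : ℝ | 0 < l ∧ PhiGBeta n G Ω β (fun x => u x / l) ≤ 1}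

/-- Seminorm associated to `PhisGStar`. -/
def gagliardoStar (n : ℕ) (s : ℝ) (G : ℝ → ℝ) (Ω : Set (Eu n)) (u : Eu n → ℝ) : ℝ :=
  sInf {l : ℝ | 0 < l ∧ PhisGStar n s G Ω (fun x => u x / l) ≤ 1}

/-- Norm of the space `X_β(Ω)`. -/
def XbetaNorm (n : ℕ) (s : ℝ) (G : ℝ → ℝ) (Ω : Set (Eu n)) (β : Eu n → ℝ) (u : Eu n → ℝ) : ℝ :=
  gagliardoStar n s G Ω u + luxNorm n G Ω u + luxNormBeta n G Ω β u

/-- `λ` is a Robin eigenvalue with eigenfunction `u`. -/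
def RobinEigen (n : ℕ) (s : ℝ) (G g : ℝ → ℝ) (Ω : Set (Eu n)) (β : Eu n → ℝ) (lam : ℝ)
    (u : Eu n → ℝ) : Prop :=
  MemXbeta n s G Ω β u ∧ ¬ (u =ᵐ[(volume : Measure (Eu n))] (fun _ => (0:ℝ))) ∧
  ∀ v : Eu n → ℝ, MemXbeta n s G Ω β v →
    (∫ p in {p : Eu n × Eu n | p.1 ∈ Ω ∨ p.2 ∈ Ω},
        g |Ds n s u p.1 p.2| * rsgn (Ds n s u p.1 p.2) * Ds n s v p.1 p.2 / ‖p.1 - p.2‖ ^ (n : ℝ))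
      = lam * (∫ x in Ω, g |u x| * rsgn (u x) * v x)
          - ∫ x in Ωᶜ, β x * (g |u x| * rsgn (u x) * v x)

/-- Sequential compactness of `K` with respect to a distance-like function `d`. -/
def SeqCompactD {X : Type*} (d : X → X → ℝ) (K : Set X) : Prop :=
  ∀ f : ℕ → X, (∀ j, f j ∈ K) → ∃ u ∈ K, ∃ φ : ℕ → ℕ, StrictMono φ ∧
    Tendsto (fun j => d (f (φ j)) u) atTop (𝓝 (0:ℝ))

/-- `h` is sequentially continuous on `K` with respect to `d`. -/
def SeqContOnD {X Y : Type*} [TopologicalSpace Y] (d : X → X → ℝ) (K : Set X) (h : X → Y) :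
    Prop :=
  ∀ f : ℕ → X, ∀ u, (∀ j, f j ∈ K) → u ∈ K →
    Tendsto (fun j => d (f j) u) atTop (𝓝 (0:ℝ)) →
    Tendsto (fun j => h (f j)) atTop (𝓝 (h u))

/-- The Krasnoselskii genus of `K` is at least `k`: every continuous odd map
`h : K → ℝᵐ ∖ {0}` forces `m ≥ k`. -/
def GenusGeD {X : Type*} [Neg X] (d : X → X → ℝ) (K : Set X) (k : ℕ) : Prop :=
  ∀ m : ℕ, ∀ h : X → (Fin m → ℝ),
    SeqContOnD d K h → (∀ u ∈ K, h (-u) = - h u) → (∀ u ∈ K, h u ≠ 0) → k ≤ m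

/-! Convexity of `t ↦ G (√t)` together with `G 0 = 0` makes it superadditive on `[0, ∞)`. By
the parallelogram law the squares of `(a + b) / 2` and `(a - b) / 2` add up to the midpoint of `a²`
and `b²`; superadditivity bounds the left-hand side by the value at that midpoint, and convexity
bounds this value by the right-hand side. -/

theorem map_smul_le_smul_of_convexOn {𝕜 E β : Type*} [Ring 𝕜] [PartialOrder 𝕜] [IsOrderedRing 𝕜]
    [AddCommMonoid E] [Module 𝕜 E] [AddCommMonoid β] [PartialOrder β] [IsOrderedAddMonoid β]
    [Module 𝕜 β] [PosSMulMono 𝕜 β] {s : Set E} {f : E → β} (hf : ConvexOn 𝕜 s f) (h0 : (0 : E) ∈ s)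
    (hf0 : f 0 ≤ 0) {x : E} (hx : x ∈ s) {a : 𝕜} (ha : 0 ≤ a) (ha1 : a ≤ 1) :
    f (a • x) ≤ a • f x :=
  calc f (a • x) = f (a • x + (1 - a) • 0) := by rw [smul_zero, add_zero]
    _ ≤ a • f x + (1 - a) • f 0 := hf.2 hx h0 ha (sub_nonneg.2 ha1) (add_sub_cancel a 1)
    _ ≤ a • f x := add_le_of_nonpos_right (smul_nonpos_of_nonneg_of_nonpos (sub_nonneg.2 ha1) hf0)

theorem add_le_map_add_of_sameRay_of_convexOn {𝕜 E β : Type*}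
    [Field 𝕜] [LinearOrder 𝕜] [IsStrictOrderedRing 𝕜] [AddCommGroup E] [Module 𝕜 E]
    [AddCommMonoid β] [PartialOrder β] [IsOrderedAddMonoid β] [Module 𝕜 β] [PosSMulMono 𝕜 β]
    {s : Set E} {f : E → β} (hf : ConvexOn 𝕜 s f) (h0 : (0 : E) ∈ s) (hf0 : f 0 ≤ 0)
    {x y : E} (hxy : SameRay 𝕜 x y) (hs : x + y ∈ s) :
    f x + f y ≤ f (x + y) := by
  obtain ⟨a, b, ha, hb, hab, hx, hy⟩ := hxy.exists_eq_smul_add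
  have hfx : f x ≤ a • f (x + y) := by
    conv_lhs => rw [hx]
    exact map_smul_le_smul_of_convexOn hf h0 hf0 hs ha (by linarith)
  have hfy : f y ≤ b • f (x + y) := by
    conv_lhs => rw [hy]
    exact map_smul_le_smul_of_convexOn hf h0 hf0 hs hb (by linarith)
  calc f x + f y ≤ a • f (x + y) + b • f (x + y) := add_le_add hfx hfy
    _ = f (x + y) := by rw [← add_smul, hab, one_smul]

theorem sameRay_of_nonneg {R : Type*} [CommRing R] [LinearOrder R] [IsStrictOrderedRing R] {x y : R}
    (hx : 0 ≤ x) (hy : 0 ≤ y) : SameRay R x y := by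
  simpa only [smul_eq_mul, mul_one] using
    sameRay_smul_smul_of_mul_nonneg (v := (1 : R)) (mul_nonneg hx hy)

theorem IsYoungPair.map_zero {G g : ℝ → ℝ} (hY : IsYoungPair G g) : G 0 = 0 := by
  rw [hY.G_eq 0 le_rfl, intervalIntegral.integral_same]

namespace CondG2

variable {G : ℝ → ℝ}

theorem map_sqrt_add_map_sqrt_le (hG : CondG2 G) (hG0 : G 0 ≤ 0) {x y : ℝ} (hx : 0 ≤ x)
    (hy : 0 ≤ y) : G √x + G √y ≤ G √(x + y) :=
  add_le_map_add_of_sameRay_of_convexOn hG self_mem_Ici (by simpa only [Real.sqrt_zero] using hG0)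
    (sameRay_of_nonneg hx hy) (add_nonneg hx hy)

theorem map_sqrt_midpoint_le (hG : CondG2 G) {x y : ℝ} (hx : 0 ≤ x) (hy : 0 ≤ y) :
    G √((x + y) / 2) ≤ (G √x + G √y) / 2 := by
  have h := hG.2 (mem_Ici.2 hx) (mem_Ici.2 hy) one_half_pos.le one_half_pos.le (add_halves 1)
  simpa only [smul_eq_mul, one_div_mul_eq_div, add_div] using h

end CondG2

theorem norm_half_smul_add_sq_add_norm_half_smul_sub_sq {E : Type*} [NormedAddCommGroup E]
    [InnerProductSpace ℝ E] (x y : E) :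
    ‖(2⁻¹ : ℝ) • (x + y)‖ ^ 2 + ‖(2⁻¹ : ℝ) • (x - y)‖ ^ 2 = (‖x‖ ^ 2 + ‖y‖ ^ 2) / 2 := by
  have h := parallelogram_law_with_norm ℝ x y
  rw [norm_smul, norm_smul, Real.norm_of_nonneg (by norm_num : (0 : ℝ) ≤ 2⁻¹)]
  linarith

theorem statement3_general {E : Type*} [NormedAddCommGroup E] [InnerProductSpace ℝ E]
    {G : ℝ → ℝ} (hG0 : G 0 ≤ 0) (hG : CondG2 G) (x y : E) :
    G ‖(2⁻¹ : ℝ) • (x + y)‖ + G ‖(2⁻¹ : ℝ) • (x - y)‖ ≤ (G ‖x‖ + G ‖y‖) / 2 :=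
  calc G ‖(2⁻¹ : ℝ) • (x + y)‖ + G ‖(2⁻¹ : ℝ) • (x - y)‖
      = G √(‖(2⁻¹ : ℝ) • (x + y)‖ ^ 2) + G √(‖(2⁻¹ : ℝ) • (x - y)‖ ^ 2) := by
        simp only [Real.sqrt_sq (norm_nonneg _)]
    _ ≤ G √(‖(2⁻¹ : ℝ) • (x + y)‖ ^ 2 + ‖(2⁻¹ : ℝ) • (x - y)‖ ^ 2) :=
        hG.map_sqrt_add_map_sqrt_le hG0 (sq_nonneg _) (sq_nonneg _)
    _ = G √((‖x‖ ^ 2 + ‖y‖ ^ 2) / 2) := by rw [norm_half_smul_add_sq_add_norm_half_smul_sub_sq]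
    _ ≤ (G √(‖x‖ ^ 2) + G √(‖y‖ ^ 2)) / 2 :=
        hG.map_sqrt_midpoint_le (sq_nonneg _) (sq_nonneg _)
    _ = (G ‖x‖ + G ‖y‖) / 2 := by simp only [Real.sqrt_sq (norm_nonneg _)]

/-- Lemma 2.3: `(G(|a|)+G(|b|))/2 ≥ G(|(a+b)/2|) + G(|(a−b)/2|)`. -/
theorem statement3 (G g : ℝ → ℝ) (pm pp : ℝ)
    (hY : IsYoungPair G g) (hG1 : CondG1 G g pm pp) (hG2 : CondG2 G)
    (a b : ℝ) :
    G (|(a + b) / 2|) + G (|(a - b) / 2|) ≤ (G |a| + G |b|) / 2 := by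
  simpa only [smul_eq_mul, inv_mul_eq_div, Real.norm_eq_abs] using
    statement3_general hY.map_zero.le hG2 a b
end
end

section
/- Let G be a Young function with G' = g (so G is convex and differentiable on (0,∞)). Then for all a, b ∈ ℝ one has G(|a|) + G(|b|) ≤ 2·G(|(a + b)/2|) + (1/2)·(g(|a|)·sgn(a) − g(|b|)·sgn(b))·(a − b), where sgn(t) = t/|t| for t ≠ 0 and sgn(0) = 0. -/
open MeasureTheory Filter Set Topology
open scoped ENNReal

noncomputable section

/-!
The map `x ↦ G ‖x‖` is convex and has `g ‖x‖ • x / ‖x‖` (`0` at `x = 0`) as a subgradient at `x`: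
on `[0, ∞)` the graph of `G` lies above its tangents because `g` increases, and the Cauchy–Schwarz
inequality carries this over to vectors because `g ≥ 0`. The subgradient inequalities at `a` and at
`b`, both evaluated at the midpoint `m` of `a` and `b`, add up to the claim, since
`a - m = (a - b) / 2 = -(b - m)`.
-/

section YoungFunction

open scoped RealInnerProductSpace

theorem intervalIntegral_le_mul_sub_of_monotoneOn {g : ℝ → ℝ} {s t : ℝ}
    (hg : MonotoneOn g (uIcc t s)) : ∫ τ in t..s, g τ ≤ g s * (s - t) := by
  have hint : IntervalIntegrable g volume t s := hg.intervalIntegrable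
  rcases le_total t s with hts | hst
  · calc ∫ τ in t..s, g τ
        ≤ ∫ _ in t..s, g s :=
          intervalIntegral.integral_mono_on hts hint intervalIntegrable_const fun τ hτ =>
            hg (Icc_subset_uIcc hτ) right_mem_uIcc hτ.2
      _ = g s * (s - t) := by rw [intervalIntegral.integral_const, smul_eq_mul, mul_comm]
  · have hle : (t - s) * g s ≤ ∫ τ in s..t, g τ := by
      rw [← smul_eq_mul, ← intervalIntegral.integral_const]
      exact intervalIntegral.integral_mono_on hst intervalIntegrable_const hint.symm fun τ hτ =>
        hg right_mem_uIcc (Icc_subset_uIcc' hτ) hτ.1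
    rw [intervalIntegral.integral_symm]
    linarith

theorem sub_le_mul_sub_of_eq_intervalIntegral {G g : ℝ → ℝ} (hg : MonotoneOn g (Ici 0))
    (hG : ∀ t ≥ 0, G t = ∫ τ in (0 : ℝ)..t, g τ) {s t : ℝ} (hs : 0 ≤ s) (ht : 0 ≤ t) :
    G s - G t ≤ g s * (s - t) := by
  have hmono {x y : ℝ} (hx : 0 ≤ x) (hy : 0 ≤ y) : MonotoneOn g (uIcc x y) :=
    hg.mono (ordConnected_Ici.uIcc_subset hx hy)
  rw [hG s hs, hG t ht, intervalIntegral.integral_interval_sub_left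
    (hmono le_rfl hs).intervalIntegrable (hmono le_rfl ht).intervalIntegrable]
  exact intervalIntegral_le_mul_sub_of_monotoneOn (hmono ht hs)

variable {E : Type*} [NormedAddCommGroup E] [InnerProductSpace ℝ E]

theorem inner_normalize_self (x : E) : ⟪NormedSpace.normalize x, x⟫ = ‖x‖ := by
  rw [NormedSpace.normalize, real_inner_smul_left, real_inner_self_eq_norm_mul_norm, ← mul_assoc,
    inv_mul_mul_self]

theorem inner_normalize_le_norm (x y : E) : ⟪NormedSpace.normalize x, y⟫ ≤ ‖y‖ := by
  have hx : ‖NormedSpace.normalize x‖ ≤ 1 := by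
    simpa only [NormedSpace.normalize, norm_smul, norm_inv, norm_norm] using inv_mul_le_one
  calc ⟪NormedSpace.normalize x, y⟫ ≤ ‖NormedSpace.normalize x‖ * ‖y‖ := real_inner_le_norm _ _
    _ ≤ ‖y‖ := mul_le_of_le_one_left (norm_nonneg y) hx

theorem norm_sub_norm_le_inner_normalize_sub (x y : E) :
    ‖x‖ - ‖y‖ ≤ ⟪NormedSpace.normalize x, x - y⟫ := by
  rw [inner_sub_right, inner_normalize_self]
  exact sub_le_sub_left (inner_normalize_le_norm x y) _

theorem comp_norm_sub_comp_norm_le_inner {G g : ℝ → ℝ} (hg : MonotoneOn g (Ici 0)) (hg0 : 0 ≤ g 0)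
    (hG : ∀ t ≥ 0, G t = ∫ τ in (0 : ℝ)..t, g τ) (x y : E) :
    G ‖x‖ - G ‖y‖ ≤ ⟪g ‖x‖ • NormedSpace.normalize x, x - y⟫ := by
  have hgx : 0 ≤ g ‖x‖ := hg0.trans (hg self_mem_Ici (norm_nonneg x) (norm_nonneg x))
  calc G ‖x‖ - G ‖y‖
      ≤ g ‖x‖ * (‖x‖ - ‖y‖) :=
        sub_le_mul_sub_of_eq_intervalIntegral hg hG (norm_nonneg x) (norm_nonneg y)
    _ ≤ g ‖x‖ * ⟪NormedSpace.normalize x, x - y⟫ := by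
        gcongr
        exact norm_sub_norm_le_inner_normalize_sub x y
    _ = ⟪g ‖x‖ • NormedSpace.normalize x, x - y⟫ := (real_inner_smul_left _ _ _).symm

theorem statement6_general {G g : ℝ → ℝ} (hg : MonotoneOn g (Ici 0)) (hg0 : 0 ≤ g 0)
    (hG : ∀ t ≥ 0, G t = ∫ τ in (0 : ℝ)..t, g τ) (a b : E) :
    G ‖a‖ + G ‖b‖ ≤
      2 * G ‖midpoint ℝ a b‖
        + (1 / 2) * ⟪g ‖a‖ • NormedSpace.normalize a - g ‖b‖ • NormedSpace.normalize b, a - b⟫ := by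
  have ha := comp_norm_sub_comp_norm_le_inner hg hg0 hG a (midpoint ℝ a b)
  have hb := comp_norm_sub_comp_norm_le_inner hg hg0 hG b (midpoint ℝ a b)
  rw [left_sub_midpoint, real_inner_smul_right, invOf_eq_inv] at ha
  rw [right_sub_midpoint, real_inner_smul_right, invOf_eq_inv, ← neg_sub a b,
    inner_neg_right] at hb
  rw [inner_sub_left]
  linarith

theorem rsgn_eq_normalize (t : ℝ) : rsgn t = NormedSpace.normalize t := by
  rcases eq_or_ne t 0 with rfl | ht
  · simp [rsgn]
  · rw [rsgn, if_neg ht, NormedSpace.normalize, Real.norm_eq_abs, smul_eq_mul, div_eq_inv_mul]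

theorem real_midpoint_eq (a b : ℝ) : midpoint ℝ a b = (a + b) / 2 := by
  rw [midpoint_eq_smul_add, invOf_eq_inv, smul_eq_mul, inv_mul_eq_div]

end YoungFunction

/-- Convexity inequality: `G(|a|)+G(|b|) ≤ 2G(|(a+b)/2|) + ½(g(|a|)sgn a − g(|b|)sgn b)(a−b)`. -/
theorem statement6 (G g : ℝ → ℝ) (hY : IsYoungPair G g) (a b : ℝ) :
    G |a| + G |b| ≤
      2 * G (|(a + b) / 2|)
        + (1 / 2) * ((g |a| * rsgn a - g |b| * rsgn b) * (a - b)) := by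
  simpa only [Real.norm_eq_abs, smul_eq_mul, Real.inner_apply, rsgn_eq_normalize, real_midpoint_eq]
    using statement6_general hY.g_mono hY.g_zero.ge hY.G_eq a b
end
end

section
/- Let G be a Young function with G' = g satisfying condition (G1) and condition (G2). Then for all a, b ∈ ℝ one has (g(|a|)·sgn(a) − g(|b|)·sgn(b))·(a − b) ≥ 4·G(|a − b|/2), where sgn(t) = t/|t| for t ≠ 0 and sgn(0) = 0. -/
open MeasureTheory Filter Set Topology
open scoped ENNReal

noncomputable section

/-!
For a real inner product space, `a ↦ (g ‖a‖ / ‖a‖) • a` is a subgradient of the convex function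
`a ↦ G ‖a‖`. Adding the subgradient inequalities at `a` and `b`, both evaluated at the midpoint `m`,
bounds half of the monotonicity pairing below by `G ‖a‖ + G ‖b‖ - 2 * G ‖m‖`. Convexity of
`t ↦ G √t`, applied to the squared norms in the parallelogram law, gives Clarkson's inequality
`G ‖m‖ + G (‖a - b‖ / 2) ≤ (G ‖a‖ + G ‖b‖) / 2`, so this excess is at least `2 * G (‖a - b‖ / 2)`.
-/

theorem mul_sub_le_integral_of_monotoneOn {f : ℝ → ℝ} {s t : ℝ}
    (hf : MonotoneOn f (uIcc s t)) : f s * (t - s) ≤ ∫ τ in s..t, f τ := by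
  have hconst : f s * (t - s) = ∫ _τ in s..t, f s := by
    rw [intervalIntegral.integral_const, smul_eq_mul, mul_comm]
  rw [hconst]
  rcases le_total s t with hst | hts
  · refine intervalIntegral.integral_mono_on hst intervalIntegrable_const hf.intervalIntegrable ?_
    intro τ hτ
    exact hf left_mem_uIcc (Icc_subset_uIcc hτ) hτ.1
  · rw [intervalIntegral.integral_symm, intervalIntegral.integral_symm t s]
    refine neg_le_neg <| intervalIntegral.integral_mono_on hts hf.intervalIntegrable.symm
      intervalIntegrable_const ?_
    intro τ hτ
    exact hf (Icc_subset_uIcc' hτ) left_mem_uIcc hτ.2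

theorem add_mul_sub_le_of_eq_integral {G g : ℝ → ℝ} (hg : MonotoneOn g (Ici 0))
    (hG : ∀ t ≥ 0, G t = ∫ τ in (0 : ℝ)..t, g τ) {s t : ℝ} (hs : 0 ≤ s) (ht : 0 ≤ t) :
    G s + g s * (t - s) ≤ G t := by
  have hmono {u v : ℝ} (hu : 0 ≤ u) (hv : 0 ≤ v) : MonotoneOn g (uIcc u v) :=
    hg.mono fun _ hτ ↦ (le_min hu hv).trans hτ.1
  calc G s + g s * (t - s)
      ≤ (∫ τ in (0 : ℝ)..s, g τ) + ∫ τ in s..t, g τ :=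
        add_le_add (hG s hs).le (mul_sub_le_integral_of_monotoneOn (hmono hs ht))
    _ = ∫ τ in (0 : ℝ)..t, g τ :=
        intervalIntegral.integral_add_adjacent_intervals
          (hmono le_rfl hs).intervalIntegrable (hmono hs ht).intervalIntegrable
    _ = G t := (hG t ht).symm

theorem add_le_map_add_of_convexOn {𝕜 : Type*} [Field 𝕜] [LinearOrder 𝕜] [IsStrictOrderedRing 𝕜]
    {f : 𝕜 → 𝕜} (hf : ConvexOn 𝕜 (Ici 0) f) (hf0 : f 0 ≤ 0) {x y : 𝕜} (hx : 0 ≤ x) (hy : 0 ≤ y) :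
    f x + f y ≤ f (x + y) := by
  rcases (add_nonneg hx hy).eq_or_lt with hxy | hxy
  · obtain ⟨rfl, rfl⟩ := (add_eq_zero_iff_of_nonneg hx hy).1 hxy.symm
    simpa only [add_zero, add_le_iff_nonpos_left] using hf0
  have hsum : x / (x + y) + y / (x + y) = 1 := by rw [← add_div, div_self hxy.ne']
  have hscale {c d : 𝕜} (hc : 0 ≤ c) (hd : 0 ≤ d) (hcd : c + d = 1) :
      f (c * (x + y)) ≤ c * f (x + y) := by
    have h := hf.2 (mem_Ici.2 hxy.le) self_mem_Ici hc hd hcd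
    simp only [smul_eq_mul, mul_zero, add_zero] at h
    exact h.trans (add_le_of_nonpos_right (mul_nonpos_of_nonneg_of_nonpos hd hf0))
  have hx' : 0 ≤ x / (x + y) := div_nonneg hx hxy.le
  have hy' : 0 ≤ y / (x + y) := div_nonneg hy hxy.le
  calc f x + f y
      = f (x / (x + y) * (x + y)) + f (y / (x + y) * (x + y)) := by
        rw [div_mul_cancel₀ x hxy.ne', div_mul_cancel₀ y hxy.ne']
    _ ≤ x / (x + y) * f (x + y) + y / (x + y) * f (x + y) :=
        add_le_add (hscale hx' hy' hsum) (hscale hy' hx' (by rw [add_comm, hsum]))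
    _ = f (x + y) := by rw [← add_mul, hsum, one_mul]

section InnerProductSpace

open scoped RealInnerProductSpace

variable {E : Type*} [NormedAddCommGroup E] [InnerProductSpace ℝ E]

theorem inner_smul_sub_le_mul_norm_sub_norm {c : ℝ} (hc : 0 ≤ c) (a m : E) :
    ⟪(c / ‖a‖) • a, m - a⟫ ≤ c * (‖m‖ - ‖a‖) := by
  rcases eq_or_ne a 0 with rfl | ha
  · simpa only [smul_zero, inner_zero_left, norm_zero, sub_zero] using mul_nonneg hc (norm_nonneg m)
  calc ⟪(c / ‖a‖) • a, m - a⟫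
      = c / ‖a‖ * (⟪a, m⟫ - ‖a‖ * ‖a‖) := by
        rw [real_inner_smul_left, inner_sub_right, real_inner_self_eq_norm_mul_norm]
    _ ≤ c / ‖a‖ * (‖a‖ * ‖m‖ - ‖a‖ * ‖a‖) := by
        gcongr
        exact real_inner_le_norm a m
    _ = c * (‖m‖ - ‖a‖) := by
        have := norm_ne_zero_iff.2 ha
        field_simp

theorem norm_midpoint_sq_add_half_norm_sub_sq (a b : E) :
    ‖midpoint ℝ a b‖ ^ 2 + (‖a - b‖ / 2) ^ 2 = (‖a‖ ^ 2 + ‖b‖ ^ 2) / 2 := by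
  have hmid : ‖midpoint ℝ a b‖ = ‖a + b‖ / 2 := by
    rw [midpoint_eq_smul_add, norm_smul, invOf_eq_inv, norm_inv, Real.norm_ofNat,
      inv_mul_eq_div]
  rw [hmid]
  linear_combination parallelogram_law_with_norm ℝ a b / 4

theorem CondG2.clarkson_inequality {G : ℝ → ℝ} (hG : CondG2 G) (hG0 : G 0 ≤ 0) (a b : E) :
    G ‖midpoint ℝ a b‖ + G (‖a - b‖ / 2) ≤ (G ‖a‖ + G ‖b‖) / 2 := by
  have hsqrt {r : ℝ} (hr : 0 ≤ r) : G √(r ^ 2) = G r := by rw [Real.sqrt_sq hr]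
  calc G ‖midpoint ℝ a b‖ + G (‖a - b‖ / 2)
      = G √(‖midpoint ℝ a b‖ ^ 2) + G √((‖a - b‖ / 2) ^ 2) := by
        rw [hsqrt (norm_nonneg _), hsqrt (by positivity)]
    _ ≤ G √(‖midpoint ℝ a b‖ ^ 2 + (‖a - b‖ / 2) ^ 2) :=
        add_le_map_add_of_convexOn hG (by rwa [Real.sqrt_zero]) (sq_nonneg _) (sq_nonneg _)
    _ = G √((1 / 2 : ℝ) • ‖a‖ ^ 2 + (1 / 2 : ℝ) • ‖b‖ ^ 2) := by
        rw [norm_midpoint_sq_add_half_norm_sub_sq, ← smul_add, smul_eq_mul, one_div_mul_eq_div]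
    _ ≤ (1 / 2 : ℝ) • G √(‖a‖ ^ 2) + (1 / 2 : ℝ) • G √(‖b‖ ^ 2) :=
        hG.2 (sq_nonneg ‖a‖) (sq_nonneg ‖b‖) one_half_pos.le one_half_pos.le (add_halves 1)
    _ = (G ‖a‖ + G ‖b‖) / 2 := by
        rw [hsqrt (norm_nonneg a), hsqrt (norm_nonneg b), ← smul_add, smul_eq_mul,
          one_div_mul_eq_div]

-- At `a = 0` the coefficient is `g 0 / 0 = 0`; the value there is `0` anyway, as for `sgn 0 = 0`.
theorem statement7_general {G g : ℝ → ℝ} (hg0 : 0 ≤ g 0) (hg : MonotoneOn g (Ici 0))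
    (hG : ∀ t ≥ 0, G t = ∫ τ in (0 : ℝ)..t, g τ) (hG2 : CondG2 G) (a b : E) :
    4 * G (‖a - b‖ / 2) ≤ ⟪(g ‖a‖ / ‖a‖) • a - (g ‖b‖ / ‖b‖) • b, a - b⟫ := by
  set m := midpoint ℝ a b with hm
  have subgradient (x : E) : G ‖x‖ + ⟪(g ‖x‖ / ‖x‖) • x, m - x⟫ ≤ G ‖m‖ := by
    have hgx : 0 ≤ g ‖x‖ := hg0.trans (hg self_mem_Ici (norm_nonneg x) (norm_nonneg x))
    exact (add_le_add_right (inner_smul_sub_le_mul_norm_sub_norm hgx x m) _).trans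
      (add_mul_sub_le_of_eq_integral hg hG (norm_nonneg x) (norm_nonneg m))
  have pairing : ⟪(g ‖a‖ / ‖a‖) • a, m - a⟫ + ⟪(g ‖b‖ / ‖b‖) • b, m - b⟫
      = -⟪(g ‖a‖ / ‖a‖) • a - (g ‖b‖ / ‖b‖) • b, a - b⟫ / 2 := by
    rw [hm, midpoint_sub_left, midpoint_sub_right, ← neg_sub a b, smul_neg, inner_neg_right,
      real_inner_smul_right, real_inner_smul_right, inner_sub_left, invOf_eq_inv]
    ring
  have hG0 : G 0 ≤ 0 := by rw [hG 0 le_rfl, intervalIntegral.integral_same]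
  linarith [subgradient a, subgradient b, pairing, hG2.clarkson_inequality hG0 a b]

end InnerProductSpace

theorem rsgn_eq_div_abs (t : ℝ) : rsgn t = t / |t| := by
  unfold rsgn
  split_ifs with ht
  · rw [ht, zero_div]
  · rfl

/-- Monotonicity inequality: `(g(|a|)sgn a − g(|b|)sgn b)(a−b) ≥ 4 G(|a−b|/2)`. -/
theorem statement7 (G g : ℝ → ℝ) (pm pp : ℝ)
    (hY : IsYoungPair G g) (hG1 : CondG1 G g pm pp) (hG2 : CondG2 G)
    (a b : ℝ) :
    4 * G (|a - b| / 2) ≤ (g |a| * rsgn a - g |b| * rsgn b) * (a - b) := by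
  have h := statement7_general hY.g_zero.ge hY.g_mono hY.G_eq hG2 a b
  simpa only [Real.norm_eq_abs, smul_eq_mul, RCLike.inner_apply', conj_trivial, rsgn_eq_div_abs,
    mul_div_assoc', div_mul_eq_mul_div] using h
end
end

section
/- Let s ∈ (0,1), let G be a Young function with G' = g satisfying condition (G1), and let Ω ⊂ ℝⁿ be open and bounded. Define λ̄ = inf{ (∬_{ℝⁿ×ℝⁿ} g(|D_s u|)·|D_s u| dμ) / (∫_Ω g(|u|)·|u| dx) : u ∈ W^{s,G}_0(Ω), u not a.e. zero }. Then every Dirichlet eigenvalue λ of the fractional g-Laplacian on Ω satisfies λ ≥ λ̄; that is, there is no eigenvalue strictly below λ̄. -/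
open MeasureTheory Filter Set Topology
open scoped ENNReal

noncomputable section

/-!
Testing the weak equation of an eigenfunction `u` against `u` itself gives
`∬ g(|D_s u|) |D_s u| dμ = λ ∫_Ω g(|u|) |u|`, because `sgn(t) t = |t|`. The upper bound in (G1)
makes the right-hand integral finite, and it is positive because `g > 0` away from `0`. Hence `λ` is
the Rayleigh quotient of `u`, one of the numbers over which the infimum is taken.
-/

lemma rsgn_mul_self (t : ℝ) : rsgn t * t = |t| := by
  rcases eq_or_ne t 0 with rfl | ht
  · simp only [mul_zero, abs_zero]
  · rw [rsgn, if_neg ht, div_mul_eq_mul_div, ← abs_mul_abs_self, mul_self_div_self]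

namespace IsYoungPair

variable {G g : ℝ → ℝ} {p t : ℝ}

lemma g_nonneg (hY : IsYoungPair G g) (ht : 0 ≤ t) : 0 ≤ g t :=
  hY.g_zero.symm.le.trans (hY.g_mono self_mem_Ici ht ht)

lemma G_zero (hY : IsYoungPair G g) : G 0 = 0 := by
  rw [hY.G_eq 0 le_rfl, intervalIntegral.integral_same]

lemma intervalIntegrable (hY : IsYoungPair G g) (ht : 0 ≤ t) :
    IntervalIntegrable g volume 0 t :=
  (hY.g_mono.mono (uIcc_of_le ht ▸ Icc_subset_Ici_self)).intervalIntegrable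

lemma G_pos (hY : IsYoungPair G g) (ht : 0 < t) : 0 < G t := by
  rw [hY.G_eq t ht.le]
  exact intervalIntegral.intervalIntegral_pos_of_pos_on (hY.intervalIntegrable ht.le)
    (fun x hx => hY.g_pos x hx.1) ht

lemma G_nonneg (hY : IsYoungPair G g) (ht : 0 ≤ t) : 0 ≤ G t :=
  ht.eq_or_lt.elim (fun h => h ▸ hY.G_zero.ge) fun h => (hY.G_pos h).le

lemma g_mul_self_le (hY : IsYoungPair G g) (hp : ∀ t > 0, t * g t / G t ≤ p) (ht : 0 ≤ t) :
    g t * t ≤ p * G t := by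
  rcases ht.eq_or_lt with rfl | ht
  · rw [mul_zero, hY.G_zero, mul_zero]
  · rw [mul_comm (g t)]
    exact (div_le_iff₀ (hY.G_pos ht)).mp (hp t ht)

lemma g_abs_mul_abs_nonneg (hY : IsYoungPair G g) (t : ℝ) : 0 ≤ g |t| * |t| :=
  mul_nonneg (hY.g_nonneg (abs_nonneg t)) (abs_nonneg t)

lemma g_abs_mul_abs_eq_zero (hY : IsYoungPair G g) : g |t| * |t| = 0 ↔ t = 0 := by
  refine ⟨fun h => ?_, fun h => by rw [h, abs_zero, mul_zero]⟩
  by_contra ht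
  have ht : 0 < |t| := abs_pos.mpr ht
  exact (mul_pos (hY.g_pos _ ht) ht).ne' h

lemma measurable_g_abs (hY : IsYoungPair G g) : Measurable fun t => g |t| := by
  have hmono : Monotone fun t => g (max t 0) := fun a b hab =>
    hY.g_mono (le_max_right a 0) (le_max_right b 0) (max_le_max_right 0 hab)
  have habs (t : ℝ) : max |t| 0 = |t| := max_eq_left (abs_nonneg t)
  simpa only [Function.comp_def, habs] using hmono.measurable.comp measurable_abs

section Integral

variable {α : Type*} [MeasurableSpace α] {μ : Measure α} {u : α → ℝ}

lemma integrable_g_abs_mul_abs (hY : IsYoungPair G g) (hp : ∀ t > 0, t * g t / G t ≤ p)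
    (hu : AEMeasurable u μ) (hG : ∫⁻ x, ENNReal.ofReal (G |u x|) ∂μ < ⊤) :
    Integrable (fun x => g |u x| * |u x|) μ := by
  refine ⟨((hY.measurable_g_abs.mul measurable_abs).comp_aemeasurable hu).aestronglyMeasurable, ?_⟩
  calc ∫⁻ x, ‖g |u x| * |u x|‖ₑ ∂μ
      ≤ ∫⁻ x, ENNReal.ofReal p * ENNReal.ofReal (G |u x|) ∂μ := by
        refine lintegral_mono fun x => ?_
        rw [Real.enorm_of_nonneg (hY.g_abs_mul_abs_nonneg _),
          ← ENNReal.ofReal_mul' (hY.G_nonneg (abs_nonneg _))]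
        exact ENNReal.ofReal_le_ofReal (hY.g_mul_self_le hp (abs_nonneg _))
    _ = ENNReal.ofReal p * ∫⁻ x, ENNReal.ofReal (G |u x|) ∂μ :=
        lintegral_const_mul' _ _ ENNReal.ofReal_ne_top
    _ < ⊤ := ENNReal.mul_lt_top ENNReal.ofReal_lt_top hG

lemma integral_g_abs_mul_abs_eq_zero_iff (hY : IsYoungPair G g)
    (hu : Integrable (fun x => g |u x| * |u x|) μ) :
    ∫ x, g |u x| * |u x| ∂μ = 0 ↔ u =ᵐ[μ] 0 := by
  rw [integral_eq_zero_iff_of_nonneg (fun x => hY.g_abs_mul_abs_nonneg (u x)) hu]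
  exact eventually_congr (.of_forall fun _ => hY.g_abs_mul_abs_eq_zero)

end Integral

end IsYoungPair

section Dirichlet

variable {n : ℕ} {s : ℝ} {G g : ℝ → ℝ} {Ω : Set (Eu n)} {u : Eu n → ℝ}

lemma MemW0.lintegral_lt_top (hu : MemW0 n s G Ω u) :
    ∫⁻ x in Ω, ENNReal.ofReal (G |u x|) < ⊤ :=
  (lintegral_mono_set (subset_univ Ω)).trans_lt hu.2.1

lemma MemW0.ae_eq_zero_of_restrict (hu : MemW0 n s G Ω u) (h : u =ᵐ[volume.restrict Ω] 0) :
    u =ᵐ[volume] 0 := by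
  filter_upwards [ae_imp_of_ae_restrict h, hu.2.2.2] with x hin hout
  exact (em (x ∈ Ω)).elim hin hout

/-- The Rayleigh-type quotient `∬ g(|D_s w|) |D_s w| dμ / ∫_Ω g(|w|) |w| dx` of `w`, whose infimum
over `W^{s,G}_0(Ω)` minus the zero class is `λ̄`. Both integrals are Bochner integrals, and the
quotient is `0` when the denominator vanishes. -/
def rayleighQuotient (n : ℕ) (s : ℝ) (g : ℝ → ℝ) (Ω : Set (Eu n)) (w : Eu n → ℝ) : ℝ :=
  (∫ p : Eu n × Eu n, g |Ds n s w p.1 p.2| * |Ds n s w p.1 p.2| / ‖p.1 - p.2‖ ^ (n : ℝ))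
    / ∫ x in Ω, g |w x| * |w x|

lemma rayleighQuotient_nonneg (hY : IsYoungPair G g) (w : Eu n → ℝ) :
    0 ≤ rayleighQuotient n s g Ω w :=
  div_nonneg
    (integral_nonneg fun _ => div_nonneg (hY.g_abs_mul_abs_nonneg _)
      (Real.rpow_nonneg (norm_nonneg _) _))
    (integral_nonneg fun _ => hY.g_abs_mul_abs_nonneg _)

variable {lam : ℝ}

lemma DirichletEigen.integral_eq (heig : DirichletEigen n s G g Ω lam u) :
    ∫ p : Eu n × Eu n, g |Ds n s u p.1 p.2| * |Ds n s u p.1 p.2| / ‖p.1 - p.2‖ ^ (n : ℝ)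
      = lam * ∫ x in Ω, g |u x| * |u x| := by
  simpa only [mul_assoc, rsgn_mul_self] using heig.2.2 u heig.1

lemma DirichletEigen.rayleighQuotient_eq {p : ℝ} (hY : IsYoungPair G g)
    (hp : ∀ t > 0, t * g t / G t ≤ p) (heig : DirichletEigen n s G g Ω lam u) :
    rayleighQuotient n s g Ω u = lam := by
  have hint : IntegrableOn (fun x => g |u x| * |u x|) Ω :=
    hY.integrable_g_abs_mul_abs hp heig.1.1.aemeasurable heig.1.lintegral_lt_top
  have hne : ∫ x in Ω, g |u x| * |u x| ≠ 0 := fun h =>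
    heig.2.1 (heig.1.ae_eq_zero_of_restrict ((hY.integral_g_abs_mul_abs_eq_zero_iff hint).mp h))
  rw [rayleighQuotient, heig.integral_eq, mul_div_cancel_right₀ lam hne]

theorem statement9_general {p : ℝ} (hY : IsYoungPair G g) (hp : ∀ t > 0, t * g t / G t ≤ p)
    (heig : DirichletEigen n s G g Ω lam u) :
    sInf {r : ℝ | ∃ w : Eu n → ℝ, MemW0 n s G Ω w ∧
        ¬ (w =ᵐ[(volume : Measure (Eu n))] (fun _ => (0:ℝ))) ∧
        r = rayleighQuotient n s g Ω w} ≤ lam := by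
  refine csInf_le ⟨0, ?_⟩ ⟨u, heig.1, heig.2.1, (heig.rayleighQuotient_eq hY hp).symm⟩
  rintro r ⟨w, -, -, rfl⟩
  exact rayleighQuotient_nonneg hY w

end Dirichlet

/-- No Dirichlet eigenvalue lies strictly below the Rayleigh-type quotient infimum `λ̄`. -/
theorem statement9 (n : ℕ) (s : ℝ) (hs : s ∈ Ioo (0:ℝ) 1) (G g : ℝ → ℝ) (pm pp : ℝ)
    (hY : IsYoungPair G g) (hG1 : CondG1 G g pm pp)
    (Ω : Set (Eu n)) (hΩo : IsOpen Ω) (hΩb : Bornology.IsBounded Ω)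
    (lam : ℝ) (u : Eu n → ℝ) (heig : DirichletEigen n s G g Ω lam u) :
    sInf {r : ℝ | ∃ w : Eu n → ℝ, MemW0 n s G Ω w ∧
        ¬ (w =ᵐ[(volume : Measure (Eu n))] (fun _ => (0:ℝ))) ∧
        r = (∫ p : Eu n × Eu n,
              g |Ds n s w p.1 p.2| * |Ds n s w p.1 p.2| / ‖p.1 - p.2‖ ^ (n : ℝ))
            / ∫ x in Ω, g |w x| * |w x|} ≤ lam :=
  statement9_general hY (fun t ht => (hG1.2.2 t ht).2) heig
end
end
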